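/- Let A be a commutative ℂ-algebra of finite type equipped with a ℤ-grading A = ⊕_{d∈ℤ} A_d (with A_d · A_e ⊆ A_{d+e}), and let 𝔪 ⊂ A be a maximal ideal generated by homogeneous elements with residue field A/𝔪 ≅ ℂ. Let n = dim_ℂ 𝔪/𝔪². Then there exist a homogeneous element g ∈ A of degree 0 with g ∉ 𝔪, a ℤ-graded commutative ℂ-algebra B of finite type that is smooth over ℂ of relative dimension n, and a surjective ℂ-algebra homomorphism B → A_g onto the localization of A at g that preserves the gradings. -/

import Mathlib

/-!
Subtracting scalars of the residue field in degree zero, `A` is generated by finitely many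
homogeneous elements of `𝔪`, and some `n` of them represent a basis of `𝔪/𝔪²`. Modulo `𝔪²` each
remaining generator is a linear combination of these `n`, which lifts to a polynomial relation whose
linear part in the remaining variables is a single variable; its homogeneous component in the degree
of that generator is again a relation. The minor of the Jacobian matrix of these relations in the
remaining variables is then homogeneous of degree zero with constant term `1`, so its image in `A`
lies outside `𝔪`. Inverting it in the quotient of the polynomial ring by the relations gives a
graded algebra `B` which is standard smooth of relative dimension `n`, hence étale over affine
`n`-space, and this forces its Krull dimension to be `n`.
-/

universe u v

open MvPolynomial

section KrullDimension

theorem height_eq_natCard_of_isMaximal_mvPolynomial {k σ : Type*} [Field k] [Finite σ]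
    (P : Ideal (MvPolynomial σ k)) [hP : P.IsMaximal] : P.height = Nat.card σ := by
  induction σ using Finite.induction_empty_option with
  | @of_equiv α β e ih =>
    have : (P.comap (renameEquiv k e).toRingEquiv).IsMaximal :=
      Ideal.comap_isMaximal_of_equiv (renameEquiv k e).toRingEquiv
    rw [← RingEquiv.height_comap (renameEquiv k e).toRingEquiv, ih, Nat.card_congr e]
  | h_empty =>
    let := ((isEmptyRingEquiv k PEmpty).toMulEquiv.isField (Field.toIsField k)).toField
    have : P = ⊥ := (Ideal.eq_bot_or_top P).resolve_right hP.ne_top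
    simp [this]
  | @h_option α _ ih =>
    let e := (optionEquivLeft k α).symm.toRingEquiv
    have : (P.comap e).IsMaximal := Ideal.comap_isMaximal_of_equiv e
    have := Polynomial.isMaximal_comap_C_of_isJacobsonRing (P.comap e)
    have : (P.comap e).LiesOver ((P.comap e).comap Polynomial.C) := ⟨rfl⟩
    rw [← RingEquiv.height_comap e,
      Polynomial.height_eq_height_add_one ((P.comap e).comap Polynomial.C), ih, Finite.card_option]
    simp

theorem ringKrullDim_le_of_quasiFinite (R S : Type*) [CommRing R] [CommRing S] [Algebra R S]
    [Algebra.QuasiFinite R S] : ringKrullDim S ≤ ringKrullDim R := by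
  refine Order.krullDim_le_of_strictMono (PrimeSpectrum.comap (algebraMap R S)) fun P Q hPQ ↦ ?_
  refine lt_of_le_of_ne (Ideal.comap_mono hPQ.le) fun h ↦ hPQ.ne ?_
  exact PrimeSpectrum.ext (Algebra.QuasiFinite.eq_of_le_of_under_eq (R := R) _ _ hPQ.le
    (congrArg PrimeSpectrum.asIdeal h))

theorem isMaximal_under_of_finiteType (R : Type*) {S : Type*} [CommRing R] [CommRing S]
    [Algebra R S] [IsJacobsonRing R] [Algebra.FiniteType R S] (M : Ideal S) [M.IsMaximal] :
    (M.under R).IsMaximal := by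
  let := Ideal.Quotient.field M
  have := finite_of_finite_type_of_isJacobsonRing R (S ⧸ M)
  have h : (⊥ : Ideal (S ⧸ M)).under R = M.under R := by
    ext x
    exact Ideal.Quotient.eq_zero_iff_mem (I := M)
  rw [← h]
  infer_instance

theorem ringKrullDim_eq_natCard_of_etale_mvPolynomial (k σ S : Type*) [Field k] [Finite σ]
    [CommRing S] [Algebra (MvPolynomial σ k) S] [Algebra.Etale (MvPolynomial σ k) S]
    [Nontrivial S] : ringKrullDim S = Nat.card σ := by
  have : IsNoetherianRing S := Algebra.FiniteType.isNoetherianRing (MvPolynomial σ k) S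
  refine le_antisymm ((ringKrullDim_le_of_quasiFinite (MvPolynomial σ k) S).trans (by simp)) ?_
  obtain ⟨M, hM⟩ := Ideal.exists_maximal S
  have := isMaximal_under_of_finiteType (MvPolynomial σ k) M
  calc (Nat.card σ : WithBot ℕ∞)
      = (M.under (MvPolynomial σ k)).height := by
        simp [height_eq_natCard_of_isMaximal_mvPolynomial]
    _ ≤ M.height := by
        rw [Ideal.height_eq_height_add_of_liesOver_of_hasGoingDown (M.under (MvPolynomial σ k)) M]
        exact_mod_cast le_self_add
    _ ≤ ringKrullDim S := Ideal.height_le_ringKrullDim_of_ne_top hM.ne_top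

theorem ringKrullDim_eq_of_isStandardSmoothOfRelativeDimension (k S : Type*) [Field k] [CommRing S]
    [Algebra k S] [Nontrivial S] (n : ℕ) [Algebra.IsStandardSmoothOfRelativeDimension n k S] :
    ringKrullDim S = n := by
  obtain ⟨e, he⟩ :=
    Algebra.IsStandardSmoothOfRelativeDimension.exists_etale_mvPolynomial n k S
  algebraize [e.toRingHom]
  have : Algebra.Etale (MvPolynomial (Fin n) k) S := he
  simpa using ringKrullDim_eq_natCard_of_etale_mvPolynomial k (Fin n) S

end KrullDimension

section JacobianMinor

open Algebra in
theorem isStandardSmoothOfRelativeDimension_away_jacobian {R S σ τ : Type*}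
    [CommRing R] [CommRing S] [Algebra R S] [Finite σ] [Finite τ]
    (P : PreSubmersivePresentation R S σ τ) :
    IsStandardSmoothOfRelativeDimension P.dimension R (Localization.Away P.jacobian) := by
  let S' := Localization.Away P.jacobian
  let Q := PreSubmersivePresentation.localizationAway S' P.jacobian
  have hunit : IsUnit (algebraMap S S' P.jacobian) := IsLocalization.Away.algebraMap_isUnit _
  let W : SubmersivePresentation R S' (Unit ⊕ σ) (Unit ⊕ τ) :=
    { toPreSubmersivePresentation := Q.comp P
      jacobian_isUnit := by
        rw [PreSubmersivePresentation.comp_jacobian_eq_jacobian_smul_jacobian,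
          PreSubmersivePresentation.localizationAway_jacobian, Algebra.smul_def]
        exact hunit.mul hunit }
  refine W.isStandardSmoothOfRelativeDimension ?_
  simp [Presentation.dimension, Nat.add_sub_add_left]

variable {R σ τ : Type*} [CommRing R] [Fintype τ] [DecidableEq τ]

/-- The minor of the Jacobian matrix of the polynomials `f` formed by the partial derivatives in
the variables selected by `a`. -/
noncomputable def jacobianMinor (a : τ → σ) (f : τ → MvPolynomial σ R) : MvPolynomial σ R :=
  (Matrix.of fun i j ↦ pderiv (a i) (f j)).det

theorem constantCoeff_jacobianMinor (a : τ → σ) (f : τ → MvPolynomial σ R) :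
    constantCoeff (jacobianMinor a f) =
      (Matrix.of fun i j ↦ coeff (Finsupp.single (a i) 1) (f j)).det := by
  rw [jacobianMinor, RingHom.map_det]
  congr 1
  ext i j
  simp [constantCoeff_eq, coeff_pderiv]

theorem isWeightedHomogeneous_jacobianMinor {M : Type*} [AddCommGroup M] {w : σ → M} {a : τ → σ}
    {f : τ → MvPolynomial σ R} (hf : ∀ j, (f j).IsWeightedHomogeneous w (w (a j))) :
    (jacobianMinor a f).IsWeightedHomogeneous w 0 := by
  rw [jacobianMinor, Matrix.det_apply]
  refine IsWeightedHomogeneous.sum _ _ _ fun e _ ↦ ?_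
  rw [← mem_weightedHomogeneousSubmodule, Units.smul_def]
  refine zsmul_mem ?_ _
  have h := IsWeightedHomogeneous.prod Finset.univ (fun j ↦ pderiv (a (e j)) (f j))
    (fun j ↦ w (a j) - w (a (e j))) fun j _ ↦ (hf j).pderiv (sub_add_cancel _ _)
  rwa [Finset.sum_sub_distrib, Equiv.sum_comp e fun j ↦ w (a j), sub_self] at h

theorem isStandardSmoothOfRelativeDimension_away_jacobianMinor [Finite σ] {a : τ → σ}
    (ha : Function.Injective a) (f : τ → MvPolynomial σ R) :
    Algebra.IsStandardSmoothOfRelativeDimension (Nat.card σ - Fintype.card τ) R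
      (Localization.Away (Ideal.Quotient.mk (Ideal.span (Set.range f)) (jacobianMinor a f))) := by
  let P := Algebra.PreSubmersivePresentation.naive (v := f) a ha
  have hP : P.jacobian = Ideal.Quotient.mk _ (jacobianMinor a f) := by
    rw [P.jacobian_eq_jacobiMatrix_det]
    change Ideal.Quotient.mk _ P.jacobiMatrix.det = _
    congr 2
    ext i j : 1
    exact Algebra.PreSubmersivePresentation.jacobiMatrix_naive a ha _ _ i j
  rw [← hP, ← Nat.card_eq_fintype_card]
  exact isStandardSmoothOfRelativeDimension_away_jacobian P

end JacobianMinor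

section GradedMonoid

variable {ι R A : Type*} [CommRing R] [CommRing A] [Algebra R A] (𝒜 : ι → Submodule R A)

/-- The homogeneous pieces of the quotient of a graded algebra by an ideal. -/
def quotientGrading (I : Ideal A) (i : ι) : Submodule R (A ⧸ I) :=
  (𝒜 i).map (Ideal.Quotient.mkₐ R I).toLinearMap

variable {𝒜}

theorem mk_mem_quotientGrading {I : Ideal A} {i : ι} {a : A} (ha : a ∈ 𝒜 i) :
    Ideal.Quotient.mk I a ∈ quotientGrading 𝒜 I i :=
  ⟨a, ha, rfl⟩

variable [AddCommMonoid ι] [SetLike.GradedMonoid 𝒜]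

instance gradedMonoid_quotientGrading {I : Ideal A} :
    SetLike.GradedMonoid (quotientGrading 𝒜 I) where
  one_mem := mk_mem_quotientGrading SetLike.GradedOne.one_mem
  mul_mem := by
    rintro i j _ _ ⟨a, ha, rfl⟩ ⟨b, hb, rfl⟩
    exact mk_mem_quotientGrading (SetLike.GradedMul.mul_mem ha hb)

variable {g : A}

theorem pow_mul_mem_graded (hg : g ∈ 𝒜 0) {i : ι} {a : A} (ha : a ∈ 𝒜 i) (k : ℕ) :
    g ^ k * a ∈ 𝒜 i := by
  simpa using SetLike.GradedMul.mul_mem (SetLike.pow_mem_graded k hg) ha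

variable (𝒜) in
/-- The homogeneous pieces of the localization of a graded algebra away from an element `g` of
degree zero: `x` has degree `i` when `x * g ^ k` is the image of an element of `𝒜 i` for some
`k`. -/
def awayGrading (hg : g ∈ 𝒜 0) (i : ι) : Submodule R (Localization.Away g) where
  carrier := {x | ∃ k : ℕ, ∃ a ∈ 𝒜 i, x * algebraMap A _ (g ^ k) = algebraMap A _ a}
  zero_mem' := ⟨0, 0, zero_mem _, by simp⟩
  add_mem' := by
    rintro x y ⟨k, a, ha, hx⟩ ⟨l, b, hb, hy⟩
    refine ⟨k + l, g ^ l * a + g ^ k * b, add_mem (pow_mul_mem_graded hg ha l)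
      (pow_mul_mem_graded hg hb k), ?_⟩
    rw [map_add, map_mul, map_mul, ← hx, ← hy, pow_add, map_mul]
    ring
  smul_mem' := by
    rintro c x ⟨k, a, ha, hx⟩
    refine ⟨k, c • a, Submodule.smul_mem _ c ha, ?_⟩
    rw [smul_mul_assoc, hx]
    exact (map_smul (IsScalarTower.toAlgHom R A (Localization.Away g)) c a).symm

theorem algebraMap_mem_awayGrading (hg : g ∈ 𝒜 0) {i : ι} {a : A} (ha : a ∈ 𝒜 i) :
    algebraMap A (Localization.Away g) a ∈ awayGrading 𝒜 hg i :=
  ⟨0, a, ha, by simp⟩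

theorem awayMapₐ_mem_awayGrading {B : Type*} [CommRing B] [Algebra R B] {ℬ : ι → Submodule R B}
    [SetLike.GradedMonoid ℬ] {f : A →ₐ[R] B} (hf : ∀ i, ∀ a ∈ 𝒜 i, f a ∈ ℬ i) (hg : g ∈ 𝒜 0)
    {i : ι} {x : Localization.Away g} (hx : x ∈ awayGrading 𝒜 hg i) :
    Localization.awayMapₐ f g x ∈ awayGrading ℬ (hf 0 g hg) i := by
  obtain ⟨k, a, ha, hxa⟩ := hx
  have hmap (b : A) : Localization.awayMapₐ f g (algebraMap A _ b) = algebraMap B _ (f b) :=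
    IsLocalization.map_eq (T := .powers (f g))
      (Submonoid.powers_le.mpr (Submonoid.mem_powers (f g))) b
  exact ⟨k, f a, hf i a ha, by rw [← hmap, ← hxa, map_mul, hmap, map_pow f]⟩

instance gradedMonoid_awayGrading (hg : g ∈ 𝒜 0) :
    SetLike.GradedMonoid (awayGrading 𝒜 hg) where
  one_mem := ⟨0, 1, SetLike.GradedOne.one_mem, by simp⟩
  mul_mem := by
    rintro i j x y ⟨k, a, ha, hx⟩ ⟨l, b, hb, hy⟩
    refine ⟨k + l, a * b, SetLike.GradedMul.mul_mem ha hb, ?_⟩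
    rw [map_mul, ← hx, ← hy, pow_add, map_mul]
    ring

theorem exists_graded_surjective_away_quotient {B : Type*} [CommRing B] [Algebra R B]
    {ℬ : ι → Submodule R B} [SetLike.GradedMonoid ℬ] {f : A →ₐ[R] B} (hf : Function.Surjective f)
    (hf𝒜 : ∀ i, ∀ a ∈ 𝒜 i, f a ∈ ℬ i) {I : Ideal A} (hI : I ≤ RingHom.ker f) (hg : g ∈ 𝒜 0) :
    ∃ φ : Localization.Away (Ideal.Quotient.mk I g) →ₐ[R] Localization.Away (f g),
      Function.Surjective φ ∧
      ∀ i, ∀ b ∈ awayGrading (quotientGrading 𝒜 I) (mk_mem_quotientGrading hg) i,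
        φ b ∈ awayGrading ℬ (hf𝒜 0 g hg) i := by
  let f' : A ⧸ I →ₐ[R] B := Ideal.Quotient.liftₐ I f hI
  have hf' : Function.Surjective f' := Ideal.Quotient.lift_surjective_of_surjective I hI hf
  have hf'𝒜 : ∀ i, ∀ a ∈ quotientGrading 𝒜 I i, f' a ∈ ℬ i := by
    rintro i _ ⟨a, ha, rfl⟩
    exact hf𝒜 i a ha
  let φ := Localization.awayMapₐ f' (Ideal.Quotient.mk I g)
  have hφ : Function.Surjective φ := IsLocalization.Away.mapₐ_surjective_of_surjective _ hf'
  exact ⟨φ, hφ, fun i b hb ↦ awayMapₐ_mem_awayGrading hf'𝒜 (mk_mem_quotientGrading hg) hb⟩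

end GradedMonoid

section GradedAlgebra

variable {ι R A : Type*} [DecidableEq ι] [AddCommMonoid ι] [CommRing R] [CommRing A] [Algebra R A]

/-- The grading with homogeneous pieces `𝒜 i`, for independent submodules that span. -/
noncomputable abbrev gradedAlgebraOfIndep (𝒜 : ι → Submodule R A) [SetLike.GradedMonoid 𝒜]
    (hind : iSupIndep 𝒜) (htop : ⨆ i, 𝒜 i = ⊤) : GradedAlgebra 𝒜 :=
  { (DirectSum.isInternal_submodule_of_iSupIndep_of_iSup_eq_top hind htop).chooseDecomposition
    with }

variable {𝒜 : ι → Submodule R A} [GradedAlgebra 𝒜]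

theorem mem_of_sum_mem_of_isHomogeneous {I : Ideal A} (hI : I.IsHomogeneous 𝒜)
    {s : Finset ι} {a : ι → A} (ha : ∀ i ∈ s, a i ∈ 𝒜 i) (hsum : ∑ i ∈ s, a i ∈ I) {i : ι}
    (hi : i ∈ s) : a i ∈ I := by
  have h := hI i hsum
  rw [DirectSum.decompose_sum, DFinsupp.finsetSum_apply, AddSubmonoidClass.coe_finsetSum,
    Finset.sum_eq_single i, DirectSum.decompose_of_mem_same 𝒜 (ha i hi)] at h
  · exact h
  · exact fun j hj hji ↦ DirectSum.decompose_of_mem_ne 𝒜 (ha j hj) hji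
  · exact fun h ↦ absurd hi h

theorem isHomogeneous_ker_of_graded {B : Type*} [CommRing B] [Algebra R B] {ℬ : ι → Submodule R B}
    [GradedAlgebra ℬ] {f : A →ₐ[R] B} (hf : ∀ i, ∀ a ∈ 𝒜 i, f a ∈ ℬ i) :
    (RingHom.ker f).IsHomogeneous 𝒜 :=
  let F : 𝒜 →ₐᵍ[R] ℬ := { f with map_mem := fun h ↦ hf _ _ h }
  ((⊥ : HomogeneousIdeal ℬ).comap F.toGradedRingHom).isHomogeneous

theorem exists_finset_isHomogeneousElem_adjoin_eq_top [Algebra.FiniteType R A] :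
    ∃ s : Finset A, (∀ a ∈ s, SetLike.IsHomogeneousElem 𝒜 a) ∧
      Algebra.adjoin R (s : Set A) = ⊤ := by
  classical
  obtain ⟨t, ht⟩ := Algebra.FiniteType.out (R := R) (A := A)
  let s := t.biUnion fun a ↦ (DirectSum.decompose 𝒜 a).support.image
    fun i ↦ (DirectSum.decompose 𝒜 a i : A)
  refine ⟨s, fun b hb ↦ ?_, ?_⟩
  · simp only [s, Finset.mem_biUnion, Finset.mem_image] at hb
    obtain ⟨a, -, i, -, rfl⟩ := hb
    exact ⟨i, SetLike.coe_mem _⟩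
  · rw [eq_top_iff, ← ht, Algebra.adjoin_le_iff]
    intro a ha
    rw [SetLike.mem_coe, ← DirectSum.sum_support_decompose 𝒜 a]
    exact sum_mem fun i hi ↦ Algebra.subset_adjoin
      (Finset.mem_biUnion.mpr ⟨a, ha, Finset.mem_image_of_mem _ hi⟩)

theorem exists_sub_algebraMap_mem {I : Ideal A} (hI : I.IsHomogeneous 𝒜)
    (hres : Function.Surjective (algebraMap R (A ⧸ I))) {i : ι} {a : A} (ha : a ∈ 𝒜 i) :
    ∃ c : R, a - algebraMap R A c ∈ 𝒜 i ∧ a - algebraMap R A c ∈ I := by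
  obtain ⟨c, hc⟩ := hres (Ideal.Quotient.mk I a)
  have hcI : a - algebraMap R A c ∈ I := Ideal.Quotient.eq.mp hc.symm
  obtain rfl | hi := eq_or_ne i 0
  · exact ⟨c, sub_mem ha (SetLike.algebraMap_mem_graded 𝒜 c), hcI⟩
  · have haI : a ∈ I := by
      have h := hI i hcI
      rwa [DirectSum.decompose_sub, DFinsupp.sub_apply, Submodule.coe_sub,
        DirectSum.decompose_of_mem_same 𝒜 ha,
        DirectSum.decompose_of_mem_ne 𝒜 (SetLike.algebraMap_mem_graded 𝒜 c) hi.symm,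
        sub_zero] at h
    exact ⟨0, by simpa using ha, by simpa using haI⟩

theorem exists_homogeneous_generators_mem [Algebra.FiniteType R A] {I : Ideal A}
    (hI : I.IsHomogeneous 𝒜) (hres : Function.Surjective (algebraMap R (A ⧸ I))) :
    ∃ (n : ℕ) (w : Fin n → ι) (x : Fin n → A), (∀ i, x i ∈ 𝒜 (w i)) ∧ (∀ i, x i ∈ I) ∧
      Function.Surjective (aeval x : MvPolynomial (Fin n) R →ₐ[R] A) := by
  obtain ⟨s, hs, hadjoin⟩ := exists_finset_isHomogeneousElem_adjoin_eq_top (R := R) (𝒜 := 𝒜)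
  let y (i : Fin s.card) : A := s.equivFin.symm i
  choose w hw using fun i ↦ hs (y i) (s.equivFin.symm i).2
  choose c hc𝒜 hcI using fun i ↦ exists_sub_algebraMap_mem hI hres (hw i)
  refine ⟨s.card, w, fun i ↦ y i - algebraMap R A (c i), hc𝒜, hcI, ?_⟩
  rw [← AlgHom.range_eq_top, ← Algebra.adjoin_range_eq_range_aeval, eq_top_iff, ← hadjoin,
    Algebra.adjoin_le_iff]
  intro a ha
  obtain ⟨i, hi⟩ := s.equivFin.symm.surjective ⟨a, ha⟩
  obtain rfl : y i = a := congrArg Subtype.val hi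
  rw [← sub_add_cancel (y i) (algebraMap R A (c i))]
  exact add_mem (Algebra.subset_adjoin ⟨i, rfl⟩) (Subalgebra.algebraMap_mem _ _)

section Quotient

variable {I : Ideal A}

theorem iSupIndep_quotientGrading (hI : I.IsHomogeneous 𝒜) :
    iSupIndep (quotientGrading 𝒜 I) := by
  rw [iSupIndep_iff_finsetSum_eq_zero_imp_eq_zero]
  intro s v hv hsum i hi
  choose! a ha hav using hv
  rw [← hav i hi]
  refine Ideal.Quotient.eq_zero_iff_mem.mpr (mem_of_sum_mem_of_isHomogeneous hI ha ?_ hi)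
  rw [← Ideal.Quotient.eq_zero_iff_mem, map_sum, ← hsum]
  exact Finset.sum_congr rfl hav

theorem iSup_quotientGrading : ⨆ i, quotientGrading 𝒜 I i = ⊤ := by
  simp only [quotientGrading]
  rw [← Submodule.map_iSup, (DirectSum.Decomposition.isInternal 𝒜).submodule_iSup_eq_top,
    Submodule.map_top, LinearMap.range_eq_top]
  exact Ideal.Quotient.mk_surjective

/-- The grading on the quotient of a graded algebra by a homogeneous ideal. -/
noncomputable abbrev gradedAlgebraQuotient (hI : I.IsHomogeneous 𝒜) :
    GradedAlgebra (quotientGrading 𝒜 I) :=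
  gradedAlgebraOfIndep _ (iSupIndep_quotientGrading hI) iSup_quotientGrading

end Quotient

section Away

variable {g : A} (hg : g ∈ 𝒜 0)
include hg

theorem isHomogeneous_ker_algebraMap_away :
    (RingHom.ker (algebraMap A (Localization.Away g))).IsHomogeneous 𝒜 := by
  intro i a ha
  rw [RingHom.mem_ker, IsLocalization.map_eq_zero_iff (.powers g)] at ha ⊢
  obtain ⟨⟨_, k, rfl⟩, hka : g ^ k * a = 0⟩ := ha
  have hgk : g ^ k ∈ 𝒜 0 := by simpa using SetLike.pow_mem_graded k hg
  refine ⟨⟨_, k, rfl⟩, ?_⟩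
  simpa [hka] using (DirectSum.coe_decompose_mul_of_left_mem_zero 𝒜 (j := i) (b := a) hgk).symm

theorem iSupIndep_awayGrading : iSupIndep (awayGrading 𝒜 hg) := by
  rw [iSupIndep_iff_finsetSum_eq_zero_imp_eq_zero]
  intro s v hv hsum i hi
  choose! k a ha hav using hv
  let K := ∑ j ∈ s, k j
  have hnum (j : ι) (hj : j ∈ s) : algebraMap A (Localization.Away g) (g ^ (K - k j) * a j) =
      v j * algebraMap A _ (g ^ K) := by
    rw [map_mul, ← hav j hj, mul_left_comm, ← map_mul, ← pow_add,
      Nat.sub_add_cancel (Finset.single_le_sum (fun _ _ ↦ Nat.zero_le _) hj)]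
  have hker := mem_of_sum_mem_of_isHomogeneous (isHomogeneous_ker_algebraMap_away hg)
    (fun j hj ↦ pow_mul_mem_graded hg (ha j hj) (K - k j))
    (by rw [RingHom.mem_ker, map_sum, Finset.sum_congr rfl hnum, ← Finset.sum_mul, hsum, zero_mul])
    hi
  have hunit : IsUnit (algebraMap A (Localization.Away g) (g ^ K)) :=
    IsLocalization.map_units _ (⟨_, K, rfl⟩ : Submonoid.powers g)
  rwa [RingHom.mem_ker, hnum i hi, hunit.mul_left_eq_zero] at hker

theorem iSup_awayGrading : ⨆ i, awayGrading 𝒜 hg i = ⊤ := by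
  classical
  refine eq_top_iff.mpr fun x _ ↦ ?_
  obtain ⟨⟨a, ⟨_, k, rfl⟩⟩, hxa⟩ := IsLocalization.surj (.powers g) x
  obtain ⟨u, hu⟩ : IsUnit (algebraMap A (Localization.Away g) (g ^ k)) :=
    IsLocalization.map_units _ (⟨_, k, rfl⟩ : Submonoid.powers g)
  have hx : x = ∑ i ∈ (DirectSum.decompose 𝒜 a).support,
      algebraMap A (Localization.Away g) (DirectSum.decompose 𝒜 a i : A) * ↑u⁻¹ := by
    rw [← Finset.sum_mul, ← map_sum, DirectSum.sum_support_decompose 𝒜 a, ← hxa, ← hu,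
      Units.mul_inv_cancel_right]
  rw [hx]
  refine Submodule.sum_mem _ fun i _ ↦ Submodule.mem_iSup_of_mem i
    ⟨k, DirectSum.decompose 𝒜 a i, SetLike.coe_mem _, ?_⟩
  rw [← hu, Units.inv_mul_cancel_right]

/-- The grading on the localization of a graded algebra away from an element of degree zero. -/
noncomputable instance gradedAlgebraAway : GradedAlgebra (awayGrading 𝒜 hg) :=
  gradedAlgebraOfIndep _ (iSupIndep_awayGrading hg) (iSup_awayGrading hg)

end Away

end GradedAlgebra

section WeightedHomogeneous

variable {R A σ M : Type*} [CommRing R] [CommRing A] [Algebra R A] [AddCommMonoid M]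
  {𝒜 : M → Submodule R A} {w : σ → M} {x : σ → A}

theorem aeval_mem_of_isWeightedHomogeneous [SetLike.GradedMonoid 𝒜] (hx : ∀ i, x i ∈ 𝒜 (w i))
    {d : M} {p : MvPolynomial σ R} (hp : p.IsWeightedHomogeneous w d) : aeval x p ∈ 𝒜 d := by
  rw [p.aeval_def, eval₂_eq]
  refine Submodule.sum_mem _ fun m hm ↦ ?_
  rw [← Algebra.smul_def]
  refine Submodule.smul_mem _ _ ?_
  rw [← hp (mem_support_iff.mp hm), Finsupp.weight_apply]
  exact SetLike.prod_pow_mem_graded 𝒜 _ _ _ fun i _ ↦ hx i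

theorem aeval_weightedHomogeneousComponent_eq_zero [DecidableEq M] [GradedAlgebra 𝒜]
    (hx : ∀ i, x i ∈ 𝒜 (w i)) {p : MvPolynomial σ R} (hp : aeval x p = 0) (d : M) :
    aeval x (weightedHomogeneousComponent w d p) = 0 := by
  let := weightedGradedAlgebra R w
  have hker : (RingHom.ker (aeval (R := R) x)).IsHomogeneous (weightedHomogeneousSubmodule R w) :=
    isHomogeneous_ker_of_graded fun _ _ ↦ aeval_mem_of_isWeightedHomogeneous (𝒜 := 𝒜) hx
  exact weightedHomogeneousComponent_mem_of_mem R w hker hp d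

end WeightedHomogeneous

section Cotangent

variable {k A σ : Type*} [Field k] [CommRing A] [Algebra k A] {𝔪 : Ideal A} {x : σ → A}

theorem aeval_mem_iff_constantCoeff_eq_zero (h𝔪 : 𝔪 ≠ ⊤) (hx : ∀ i, x i ∈ 𝔪)
    (p : MvPolynomial σ k) : aeval x p ∈ 𝔪 ↔ constantCoeff p = 0 := by
  have := Ideal.Quotient.nontrivial_iff.mpr h𝔪
  have hzero : (fun i ↦ Ideal.Quotient.mkₐ k 𝔪 (x i)) = 0 :=
    funext fun i ↦ Ideal.Quotient.eq_zero_iff_mem.mpr (hx i)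
  have hmk : Ideal.Quotient.mkₐ k 𝔪 (aeval x p) = algebraMap k (A ⧸ 𝔪) (constantCoeff p) := by
    rw [← AlgHom.comp_apply, comp_aeval, hzero, aeval_zero]
  rw [← Ideal.Quotient.eq_zero_iff_mem, ← Ideal.Quotient.mkₐ_eq_mk k, hmk, map_eq_zero]

theorem map_aeval_idealOfVars_eq (h𝔪 : 𝔪 ≠ ⊤) (hx : ∀ i, x i ∈ 𝔪)
    (hsurj : Function.Surjective (aeval x : MvPolynomial σ k →ₐ[k] A)) :
    (idealOfVars σ k).map (aeval x : MvPolynomial σ k →ₐ[k] A) = 𝔪 := by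
  refine le_antisymm ?_ fun a ha ↦ ?_
  · rw [Ideal.map_span, Ideal.span_le]
    rintro _ ⟨_, ⟨i, rfl⟩, rfl⟩
    simpa using hx i
  · obtain ⟨p, rfl⟩ := hsurj a
    have hp : p ∈ idealOfVars σ k ^ 1 := by
      rw [mem_pow_idealOfVars_iff']
      intro m hm
      obtain rfl : m = 0 := by simpa [Finsupp.degree_eq_zero_iff] using hm
      exact (aeval_mem_iff_constantCoeff_eq_zero h𝔪 hx p).mp ha
    exact Ideal.mem_map_of_mem _ (by simpa using hp)

theorem span_range_toCotangent_eq_top (hx : ∀ i, x i ∈ 𝔪) (hspan : Ideal.span (Set.range x) = 𝔪)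
    (hres : Function.Surjective (algebraMap k (A ⧸ 𝔪))) :
    Submodule.span k (Set.range fun i ↦ 𝔪.toCotangent ⟨x i, hx i⟩) = ⊤ := by
  have hA : Submodule.span A (Set.range fun i ↦ 𝔪.toCotangent ⟨x i, hx i⟩) = ⊤ := by
    have h : Submodule.span A (Set.range fun i ↦ (⟨x i, hx i⟩ : 𝔪)) = ⊤ :=
      (Submodule.span_range_subtype_eq_top_iff 𝔪 hx).mpr hspan
    rw [← Function.comp_def 𝔪.toCotangent, Set.range_comp, ← Submodule.map_span, h,
      Submodule.map_top, LinearMap.range_eq_top]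
    exact 𝔪.toCotangent_surjective
  have := IsScalarTower.to₁₃₄ k A (A ⧸ 𝔪) 𝔪.Cotangent
  rw [← Submodule.restrictScalars_span k (A ⧸ 𝔪) hres, Submodule.restrictScalars_eq_top_iff,
    ← Submodule.restrictScalars_eq_top_iff A,
    Submodule.restrictScalars_span A (A ⧸ 𝔪) Ideal.Quotient.mk_surjective, hA]

theorem exists_finset_card_eq_finrank_span_eq_top {V : Type*} [AddCommGroup V] [Module k V]
    [Finite σ] {v : σ → V} (hv : Submodule.span k (Set.range v) = ⊤) :
    ∃ s : Finset σ, s.card = Module.finrank k V ∧ Submodule.span k (v '' s) = ⊤ := by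
  obtain ⟨b, -, -, hb, hli⟩ :=
    exists_linearIndepOn_extension (linearIndepOn_empty k v) (Set.empty_subset Set.univ)
  rw [Set.image_univ] at hb
  have hspan : Submodule.span k (v '' b) = ⊤ :=
    eq_top_iff.mpr (hv ▸ Submodule.span_le.mpr hb)
  let := Fintype.ofFinite b
  refine ⟨b.toFinset, ?_, by rwa [Set.coe_toFinset]⟩
  rw [Set.toFinset_card, ← finrank_span_eq_card hli, ← Set.image_eq_range, hspan, finrank_top]

theorem exists_sub_sum_mem_sq_of_span_eq_top (hx : ∀ i, x i ∈ 𝔪) {s : Finset σ}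
    (hs : Submodule.span k ((fun i ↦ 𝔪.toCotangent ⟨x i, hx i⟩) '' s) = ⊤) {a : A} (ha : a ∈ 𝔪) :
    ∃ c : σ → k, a - ∑ i ∈ s, c i • x i ∈ 𝔪 ^ 2 := by
  obtain ⟨c, hc⟩ := (Submodule.mem_span_image_finset_iff_exists_fun' k).mp
    (hs ▸ Submodule.mem_top : 𝔪.toCotangent ⟨a, ha⟩ ∈ _)
  have hsum : ∑ i ∈ s, c i • 𝔪.toCotangent ⟨x i, hx i⟩ =
      𝔪.toCotangent (∑ i ∈ s, c i • ⟨x i, hx i⟩) := by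
    rw [map_sum]
    rfl
  rw [hsum, eq_comm, Ideal.toCotangent_eq] at hc
  exact ⟨c, by simpa using hc⟩

end Cotangent

section Chart

variable {k A σ ι : Type*} [Field k] [CommRing A] [Algebra k A] {𝔪 : Ideal A} {x : σ → A}

theorem exists_mem_sq_idealOfVars_aeval_eq (h𝔪 : 𝔪 ≠ ⊤) (hx : ∀ i, x i ∈ 𝔪)
    (hsurj : Function.Surjective (aeval x : MvPolynomial σ k →ₐ[k] A)) {a : A} (ha : a ∈ 𝔪 ^ 2) :
    ∃ q ∈ idealOfVars σ k ^ 2, aeval x q = a := by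
  rwa [← map_aeval_idealOfVars_eq h𝔪 hx hsurj, ← Ideal.map_pow,
    Ideal.mem_map_iff_of_surjective _ hsurj] at ha

theorem exists_isWeightedHomogeneous_aeval_eq_zero [AddCommMonoid ι] [DecidableEq ι]
    {𝒜 : ι → Submodule k A} [GradedAlgebra 𝒜] {w : σ → ι} (hw : ∀ i, x i ∈ 𝒜 (w i))
    (h𝔪 : 𝔪 ≠ ⊤) (hx : ∀ i, x i ∈ 𝔪)
    (hsurj : Function.Surjective (aeval x : MvPolynomial σ k →ₐ[k] A)) {s : Finset σ} {t : σ}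
    {c : σ → k} (hc : x t - ∑ i ∈ s, c i • x i ∈ 𝔪 ^ 2) :
    ∃ f : MvPolynomial σ k, f.IsWeightedHomogeneous w (w t) ∧ aeval x f = 0 ∧
      ∀ j ∉ s, coeff (Finsupp.single j 1) f = coeff (Finsupp.single j 1) (X t) := by
  classical
  obtain ⟨q, hq, hqx⟩ := exists_mem_sq_idealOfVars_aeval_eq h𝔪 hx hsurj hc
  let p : MvPolynomial σ k := X t - ∑ i ∈ s, C (c i) * X i - q
  have hp : aeval x p = 0 := by simp [p, hqx, Algebra.smul_def]
  -- The component of `p` in the degree of `X t` is still a relation and retains the term `X t`.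
  refine ⟨weightedHomogeneousComponent w (w t) p,
    weightedHomogeneousComponent_isWeightedHomogeneous _ _,
    aeval_weightedHomogeneousComponent_eq_zero hw hp _, fun j hj ↦ ?_⟩
  have hqj : coeff (Finsupp.single j 1) q = 0 :=
    (mem_pow_idealOfVars_iff' 2 q).mp hq _ (by simp)
  have hsj : coeff (Finsupp.single j 1) (∑ i ∈ s, C (c i) * X i) = 0 := by
    rw [coeff_sum]
    refine Finset.sum_eq_zero fun i hi ↦ ?_
    rw [coeff_C_mul, coeff_single_X, if_neg (by rintro ⟨-, rfl⟩; exact hj hi), mul_zero]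
  rw [coeff_weightedHomogeneousComponent, Finsupp.weight_single, one_smul]
  obtain rfl | hjt := eq_or_ne j t
  · simp [p, hqj, hsj]
  · simp [p, hqj, hsj, hjt.symm]

theorem exists_relations_constantCoeff_jacobianMinor_eq_one [Fintype σ] [DecidableEq σ]
    [AddCommMonoid ι] [DecidableEq ι] {𝒜 : ι → Submodule k A} [GradedAlgebra 𝒜] {w : σ → ι}
    (hw : ∀ i, x i ∈ 𝒜 (w i)) (hx : ∀ i, x i ∈ 𝔪)
    (hsurj : Function.Surjective (aeval x : MvPolynomial σ k →ₐ[k] A))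
    (hres : Function.Bijective (algebraMap k (A ⧸ 𝔪))) :
    ∃ s : Finset σ, s.card = Module.finrank k 𝔪.Cotangent ∧
      ∃ f : {i // i ∉ s} → MvPolynomial σ k, (∀ t, (f t).IsWeightedHomogeneous w (w t)) ∧
        (∀ t, aeval x (f t) = 0) ∧ constantCoeff (jacobianMinor Subtype.val f) = 1 := by
  have h𝔪 : 𝔪 ≠ ⊤ := Ideal.Quotient.nontrivial_iff.mp hres.injective.nontrivial
  have hspan : Ideal.span (Set.range x) = 𝔪 := by
    rw [← map_aeval_idealOfVars_eq h𝔪 hx hsurj, Ideal.map_span, ← Set.range_comp]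
    simp [Function.comp_def]
  obtain ⟨s, hcard, hs⟩ := exists_finset_card_eq_finrank_span_eq_top
    (span_range_toCotangent_eq_top hx hspan hres.surjective)
  choose c hc using fun t ↦ exists_sub_sum_mem_sq_of_span_eq_top hx hs (hx t)
  choose f hfw hfx hf using fun t : {i // i ∉ s} ↦
    exists_isWeightedHomogeneous_aeval_eq_zero hw h𝔪 hx hsurj (hc t)
  refine ⟨s, hcard, f, hfw, hfx, ?_⟩
  rw [constantCoeff_jacobianMinor, ← Matrix.det_one (n := {i // i ∉ s})]
  congr 1
  ext i j
  simp [hf j i i.2, coeff_single_X, Matrix.one_apply, Subtype.ext_iff, eq_comm]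

end Chart

theorem nontrivial_localizationAway_of_notMem {A : Type*} [CommRing A] {P : Ideal A} [P.IsPrime]
    {g : A} (hg : g ∉ P) : Nontrivial (Localization.Away g) := by
  rw [← not_subsingleton_iff_nontrivial, IsLocalization.subsingleton_iff (M := .powers g)]
  rintro ⟨n, hn : g ^ n = 0⟩
  exact hg (‹P.IsPrime›.mem_of_pow_mem n (hn ▸ P.zero_mem))

theorem exists_graded_standardSmooth_surjective_away {R : Type u} {σ : Type v} {τ ι A : Type*}
    [CommRing R] [Finite σ] [Fintype τ] [DecidableEq τ] [AddCommGroup ι] [DecidableEq ι]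
    [CommRing A] [Algebra R A] {𝒜 : ι → Submodule R A} [SetLike.GradedMonoid 𝒜] {w : σ → ι}
    {x : σ → A} (hw : ∀ i, x i ∈ 𝒜 (w i))
    (hsurj : Function.Surjective (aeval x : MvPolynomial σ R →ₐ[R] A)) {a : τ → σ}
    (ha : Function.Injective a) {f : τ → MvPolynomial σ R}
    (hfw : ∀ t, (f t).IsWeightedHomogeneous w (w (a t))) (hfx : ∀ t, aeval x (f t) = 0) :
    ∃ (hg : aeval x (jacobianMinor a f) ∈ 𝒜 0) (B : Type max u v) (_ : CommRing B)
      (_ : Algebra R B) (ℬ : ι → Submodule R B) (_ : GradedAlgebra ℬ)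
      (φ : B →ₐ[R] Localization.Away (aeval x (jacobianMinor a f))),
      Algebra.IsStandardSmoothOfRelativeDimension (Nat.card σ - Fintype.card τ) R B ∧
        Function.Surjective φ ∧ ∀ d, ∀ b ∈ ℬ d, φ b ∈ awayGrading 𝒜 hg d := by
  let := weightedGradedAlgebra R w
  have hI : (Ideal.span (Set.range f)).IsHomogeneous (weightedHomogeneousSubmodule R w) :=
    Ideal.homogeneous_span _ _ (Set.forall_mem_range.mpr fun t ↦ ⟨_, hfw t⟩)
  let := gradedAlgebraQuotient hI
  have hker : Ideal.span (Set.range f) ≤ RingHom.ker (aeval (R := R) x) :=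
    Ideal.span_le.mpr (Set.range_subset_iff.mpr hfx)
  have hminor : jacobianMinor a f ∈ weightedHomogeneousSubmodule R w 0 :=
    isWeightedHomogeneous_jacobianMinor hfw
  obtain ⟨φ, hφ, hφℬ⟩ := exists_graded_surjective_away_quotient hsurj
    (fun _ _ ↦ aeval_mem_of_isWeightedHomogeneous hw) hker hminor
  exact ⟨_, _, _, _, _, gradedAlgebraAway (mk_mem_quotientGrading hminor), φ,
    isStandardSmoothOfRelativeDimension_away_jacobianMinor ha f, hφ, hφℬ⟩

theorem stmt_14_general {k : Type u} {A : Type*} {ι : Type*} [Field k] [CommRing A] [Algebra k A]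
    [Algebra.FiniteType k A] [AddCommGroup ι] [DecidableEq ι] {𝒜 : ι → Submodule k A}
    [GradedAlgebra 𝒜] {𝔪 : Ideal A} (h𝔪 : 𝔪.IsHomogeneous 𝒜)
    (hres : Function.Bijective (algebraMap k (A ⧸ 𝔪))) :
    ∃ (g : A) (hg : g ∈ 𝒜 0), g ∉ 𝔪 ∧
      ∃ (B : Type u) (_ : CommRing B) (_ : Algebra k B),
        Algebra.IsStandardSmoothOfRelativeDimension (Module.finrank k 𝔪.Cotangent) k B ∧
        ringKrullDim B = Module.finrank k 𝔪.Cotangent ∧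
        ∃ (ℬ : ι → Submodule k B) (_ : GradedAlgebra ℬ) (φ : B →ₐ[k] Localization.Away g),
          Function.Surjective φ ∧ ∀ d, ∀ b ∈ ℬ d, φ b ∈ awayGrading 𝒜 hg d := by
  obtain ⟨N, w, x, hw, hx, hsurj⟩ := exists_homogeneous_generators_mem h𝔪 hres.surjective
  obtain ⟨s, hcard, f, hfw, hfx, hf⟩ :=
    exists_relations_constantCoeff_jacobianMinor_eq_one hw hx hsurj hres
  obtain ⟨hg, B, _, _, ℬ, _, φ, hB, hφ, hφℬ⟩ :=
    exists_graded_standardSmooth_surjective_away hw hsurj Subtype.val_injective hfw hfx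
  have hdim : Nat.card (Fin N) - Fintype.card {i // i ∉ s} = Module.finrank k 𝔪.Cotangent := by
    simp [← hcard, Nat.sub_sub_self (card_finset_fin_le s)]
  rw [hdim] at hB
  have hprime : 𝔪.IsPrime := (Ideal.Quotient.isDomain_iff_prime 𝔪).mp
    ((RingEquiv.ofBijective _ hres).symm.toMulEquiv.isDomain k)
  have hg𝔪 : aeval x (jacobianMinor Subtype.val f) ∉ 𝔪 := by
    simp [aeval_mem_iff_constantCoeff_eq_zero hprime.ne_top hx, hf]
  have := nontrivial_localizationAway_of_notMem hg𝔪
  have := φ.toRingHom.domain_nontrivial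
  exact ⟨_, hg, hg𝔪, B, _, _, hB, ringKrullDim_eq_of_isStandardSmoothOfRelativeDimension k B _,
    ℬ, ‹_›, φ, hφ, hφℬ⟩

/-- Let `A` be a ℤ-graded commutative ℂ-algebra of finite type and `𝔪 ⊂ A` a
maximal ideal generated by homogeneous elements with residue field `ℂ`, and let
`n = dim_ℂ 𝔪/𝔪²`. Then there is a homogeneous `g` of degree 0 with `g ∉ 𝔪`, a ℤ-graded
commutative ℂ-algebra `B` of finite type, smooth over ℂ of dimension `n`, and a surjective
grading-preserving ℂ-algebra homomorphism `B → A_g` onto the localization of `A` at `g`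
(with its induced grading). -/
theorem stmt_14 (A : Type*) [CommRing A] [Algebra ℂ A] [Algebra.FiniteType ℂ A]
    (𝒜 : ℤ → Submodule ℂ A) [GradedAlgebra 𝒜]
    (𝔪 : Ideal A) (hmax : 𝔪.IsMaximal)
    (hhomgen : ∃ S : Set A, 𝔪 = Ideal.span S ∧ ∀ s ∈ S, ∃ d : ℤ, s ∈ 𝒜 d)
    (hres : Function.Bijective (algebraMap ℂ (A ⧸ 𝔪))) :
    ∃ g : A, g ∈ 𝒜 0 ∧ g ∉ 𝔪 ∧
      ∃ (B : Type) (_ : CommRing B) (_ : Algebra ℂ B),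
        Algebra.FiniteType ℂ B ∧ Algebra.Smooth ℂ B ∧
        ringKrullDim B = (Module.finrank ℂ 𝔪.Cotangent : WithBot (WithTop ℕ)) ∧
        ∃ (ℬ : ℤ → Submodule ℂ B) (_ : GradedAlgebra ℬ)
          (𝒜' : ℤ → Submodule ℂ (Localization.Away g)) (_ : GradedAlgebra 𝒜'),
          (∀ d : ℤ, ∀ x ∈ 𝒜 d, algebraMap A (Localization.Away g) x ∈ 𝒜' d) ∧
          ∃ φ : B →ₐ[ℂ] Localization.Away g,
            Function.Surjective φ ∧ ∀ d : ℤ, ∀ b ∈ ℬ d, φ b ∈ 𝒜' d := by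
  obtain ⟨S, rfl, hS⟩ := hhomgen
  obtain ⟨g, hg, hg𝔪, B, _, _, _, hdim, ℬ, _, φ, hφ, hφℬ⟩ :=
    stmt_14_general (Ideal.homogeneous_span 𝒜 S hS) hres
  have : Algebra.IsStandardSmooth ℂ B :=
    Algebra.IsStandardSmoothOfRelativeDimension.isStandardSmooth
      (Module.finrank ℂ (Ideal.span S).Cotangent)
  exact ⟨g, hg, hg𝔪, B, _, _, inferInstance, inferInstance, hdim, ℬ, ‹_›, awayGrading 𝒜 hg,
    inferInstance, fun _ _ ↦ algebraMap_mem_awayGrading hg, φ, hφ, hφℬ⟩
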